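/- Let γ > 0, let F : (0,∞) × ℝ → ℝ be C², and let W(s) = s²(1−s)². Suppose ρ : ℝ → (0,∞), φ : ℝ → ℝ are twice continuously differentiable solutions of the planar equilibrium equations d/dx[ −F(ρ,φ) − (1/γ)W(φ) − (γ/2)φ′² + ρ·∂F/∂ρ(ρ,φ) ] = −γ d/dx[ φ′² ] and (1/γ)W′(φ) + ∂F/∂φ(ρ,φ) = γ φ″, with ρ(x) → ρ_V, φ(x) → 0, φ′(x) → 0 as x → −∞, ρ(x) → ρ_L, φ(x) → 1, φ′(x) → 0 as x → +∞, and ∂F/∂ρ(ρ_V, 0) = 0. Assume x ↦ φ′(x)² is integrable on ℝ. Then for every choice of dividing-interface position x₀ ∈ ℝ, the excess free energy ∫_{−∞}^{x₀} [ F(ρ,φ) + (1/γ)W(φ) + (γ/2)φ′² − F(ρ_V,0) ] dx + ∫_{x₀}^{∞} [ F(ρ,φ) + (1/γ)W(φ) + (γ/2)φ′² − F(ρ_L,1) ] dx is well defined (both integrals converge) and equals ∫_{−∞}^{∞} γ φ′(x)² dx; in particular it is independent of x₀. -/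

import Mathlib

open Set Filter MeasureTheory

/-!
Let `μ = ∂F/∂ρ` be the chemical potential along the profile and let
`E = F + W/γ - (γ/2) φ'²`. The phase equation says exactly that `E' = μ ρ'`. The momentum
equation reads `(ρ μ - E)' = 0`, so `ρ μ' = 0`: in the absence of vacuum `μ` is constant, hence
equal to its limit `0` at the vapor end, and then `E` is constant as well. Evaluating `E` at the
two ends identifies it with both bulk values, which is equipartition and equality of the bulk
energies at once. The excess density is therefore `γ φ'²` pointwise on either side of the
dividing interface.
-/

open Function
open scoped Topology

section PartialDerivatives

variable {𝕜 E : Type*} [NontriviallyNormedField 𝕜] [NormedAddCommGroup E] [NormedSpace 𝕜 E]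

theorem contDiffAt_deriv_fst {G : Type*} [NormedAddCommGroup G] [NormedSpace 𝕜 G]
    {f : 𝕜 → G → E} {p : 𝕜 × G} {m n : WithTop ℕ∞}
    (hf : ContDiffAt 𝕜 n (uncurry f) p) (hmn : m + 1 ≤ n) :
    ContDiffAt 𝕜 m (fun q : 𝕜 × G => deriv (fun t => f t q.2) q.1) p := by
  have hswap : ContDiffAt 𝕜 n (uncurry fun (q : 𝕜 × G) t => f t q.2) (p, p.1) :=
    hf.comp (f := fun z : (𝕜 × G) × 𝕜 => (z.2, z.1.2)) (p, p.1) (by fun_prop)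
  exact (hswap.fderiv contDiffAt_fst hmn).clm_apply contDiffAt_const

theorem hasDerivAt_comp₂ {f : 𝕜 → 𝕜 → E} {u v : 𝕜 → 𝕜} {u' v' x : 𝕜}
    (hf : DifferentiableAt 𝕜 (uncurry f) (u x, v x))
    (hu : HasDerivAt u u' x) (hv : HasDerivAt v v' x) :
    HasDerivAt (fun y => f (u y) (v y))
      (u' • deriv (fun r => f r (v x)) (u x) + v' • deriv (fun s => f (u x) s) (v x)) x := by
  have hfst : deriv (fun r => f r (v x)) (u x) = fderiv 𝕜 (uncurry f) (u x, v x) (1, 0) :=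
    (hf.hasFDerivAt.comp_hasDerivAt (f := fun r => (r, v x)) (u x)
      ((hasDerivAt_id (u x)).prodMk (hasDerivAt_const (u x) (v x)))).deriv
  have hsnd : deriv (fun s => f (u x) s) (v x) = fderiv 𝕜 (uncurry f) (u x, v x) (0, 1) :=
    (hf.hasFDerivAt.comp_hasDerivAt (f := fun s => (u x, s)) (v x)
      ((hasDerivAt_const (v x) (u x)).prodMk (hasDerivAt_id (v x)))).deriv
  refine (hf.hasFDerivAt.comp_hasDerivAt x (hu.prodMk hv)).congr_deriv ?_
  rw [hfst, hsnd, ← map_smul, ← map_smul, ← map_add]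
  simp

end PartialDerivatives

theorem eq_of_hasDerivAt_zero_of_tendsto {𝕜 E : Type*} [RCLike 𝕜] [NormedAddCommGroup E]
    [NormedSpace 𝕜 E] {f : 𝕜 → E} {l : Filter 𝕜} [NeBot l] {c : E}
    (hf : ∀ x, HasDerivAt f 0 x) (hlim : Tendsto f l (𝓝 c)) (x : 𝕜) : f x = c := by
  have hconst : ∀ y, f y = f x := fun y =>
    is_const_of_deriv_eq_zero (fun z => (hf z).differentiableAt) (fun z => (hf z).deriv) y x
  exact tendsto_nhds_unique (tendsto_const_nhds.congr fun y => (hconst y).symm) hlim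

/-- The chemical potential `∂F/∂ρ (ρ, φ)` along a profile `(ρ, φ)` with free energy `F`. -/
noncomputable def chemicalPotential (F : ℝ → ℝ → ℝ) (ρ φ : ℝ → ℝ) (x : ℝ) : ℝ :=
  deriv (fun r => F r (φ x)) (ρ x)

/-- The full free energy density along a profile. The potential `V` includes its prefactor, so
that `V = W / γ` for a double well `W`. -/
noncomputable def freeEnergyDensity (γ : ℝ) (F : ℝ → ℝ → ℝ) (V ρ φ : ℝ → ℝ) (x : ℝ) : ℝ :=
  F (ρ x) (φ x) + V (φ x) + (γ / 2) * deriv φ x ^ 2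

/-- The difference of bulk and gradient energy densities along a profile, a first integral of the
equilibrium equations; its constancy is the equipartition identity. -/
noncomputable def firstIntegral (γ : ℝ) (F : ℝ → ℝ → ℝ) (V ρ φ : ℝ → ℝ) (x : ℝ) : ℝ :=
  F (ρ x) (φ x) + V (φ x) - (γ / 2) * deriv φ x ^ 2

/-- Classical solutions, without vacuum, of the planar equilibrium equations with capillary
parameter `γ`, free energy `F` and phase potential `V` (which includes the prefactor `1 / γ`). -/
structure IsPlanarEquilibrium (γ : ℝ) (F : ℝ → ℝ → ℝ) (V ρ φ : ℝ → ℝ) : Prop where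
  differentiable_density : Differentiable ℝ ρ
  differentiable_phase : Differentiable ℝ φ
  differentiable_deriv_phase : Differentiable ℝ (deriv φ)
  density_ne_zero : ∀ x, ρ x ≠ 0
  momentum_eq : ∀ x, deriv (fun y => -F (ρ y) (φ y) - V (φ y) - (γ / 2) * deriv φ y ^ 2
    + ρ y * chemicalPotential F ρ φ y) x = -γ * deriv (fun y => deriv φ y ^ 2) x
  phase_eq : ∀ x, deriv V (φ x) + deriv (fun s => F (ρ x) s) (φ x) = γ * deriv (deriv φ) x

section Profile

variable {γ a b : ℝ} {F : ℝ → ℝ → ℝ} {V ρ φ : ℝ → ℝ} {l : Filter ℝ}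

theorem freeEnergyDensity_eq_firstIntegral_add (x : ℝ) :
    freeEnergyDensity γ F V ρ φ x = firstIntegral γ F V ρ φ x + γ * deriv φ x ^ 2 := by
  simp only [freeEnergyDensity, firstIntegral]
  ring

theorem differentiableAt_chemicalPotential {x : ℝ}
    (hF : ContDiffAt ℝ 2 (uncurry F) (ρ x, φ x))
    (hρ : DifferentiableAt ℝ ρ x) (hφ : DifferentiableAt ℝ φ x) :
    DifferentiableAt ℝ (chemicalPotential F ρ φ) x :=
  ((contDiffAt_deriv_fst hF one_add_one_eq_two.le).differentiableAt one_ne_zero).comp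
    (f := fun y => (ρ y, φ y)) x (hρ.prodMk hφ)

theorem tendsto_chemicalPotential (hF : ContDiffAt ℝ 1 (uncurry F) (a, b))
    (hρ : Tendsto ρ l (𝓝 a)) (hφ : Tendsto φ l (𝓝 b)) :
    Tendsto (chemicalPotential F ρ φ) l (𝓝 (deriv (fun r => F r b) a)) :=
  (contDiffAt_deriv_fst hF (zero_add 1).le).continuousAt.tendsto.comp (hρ.prodMk_nhds hφ)

theorem tendsto_firstIntegral (hF : ContinuousAt (uncurry F) (a, b)) (hV : ContinuousAt V b)
    (hρ : Tendsto ρ l (𝓝 a)) (hφ : Tendsto φ l (𝓝 b)) (hφ' : Tendsto (deriv φ) l (𝓝 0)) :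
    Tendsto (firstIntegral γ F V ρ φ) l (𝓝 (F a b + V b)) := by
  have hbulk : Tendsto (fun x => F (ρ x) (φ x)) l (𝓝 (F a b)) :=
    hF.tendsto.comp (hρ.prodMk_nhds hφ)
  have hgrad : Tendsto (fun x => (γ / 2) * deriv φ x ^ 2) l (𝓝 0) := by
    simpa using (hφ'.pow 2).const_mul (γ / 2)
  have hlim := (hbulk.add (hV.tendsto.comp hφ)).sub hgrad
  rwa [sub_zero] at hlim

namespace IsPlanarEquilibrium

theorem hasDerivAt_firstIntegral (h : IsPlanarEquilibrium γ F V ρ φ) {x : ℝ}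
    (hF : DifferentiableAt ℝ (uncurry F) (ρ x, φ x)) (hV : DifferentiableAt ℝ V (φ x)) :
    HasDerivAt (firstIntegral γ F V ρ φ) (chemicalPotential F ρ φ x * deriv ρ x) x := by
  have hρ := (h.differentiable_density x).hasDerivAt
  have hφ := (h.differentiable_phase x).hasDerivAt
  have hφ' := (h.differentiable_deriv_phase x).hasDerivAt
  refine (((hasDerivAt_comp₂ hF hρ hφ).add (hV.hasDerivAt.comp x hφ)).sub
    ((hφ'.fun_pow 2).const_mul (γ / 2))).congr_deriv ?_
  simp only [chemicalPotential, smul_eq_mul]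
  push_cast
  linear_combination deriv φ x * h.phase_eq x

theorem deriv_density_mul_chemicalPotential (h : IsPlanarEquilibrium γ F V ρ φ) {x : ℝ}
    (hF : ContDiffAt ℝ 2 (uncurry F) (ρ x, φ x)) (hV : DifferentiableAt ℝ V (φ x)) :
    deriv (fun y => ρ y * chemicalPotential F ρ φ y) x =
      deriv (firstIntegral γ F V ρ φ) x := by
  have hE := (h.hasDerivAt_firstIntegral (hF.differentiableAt two_ne_zero) hV).differentiableAt
  have hμ := (h.differentiable_density x).fun_mul (differentiableAt_chemicalPotential hF
    (h.differentiable_density x) (h.differentiable_phase x))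
  have hsq : DifferentiableAt ℝ (fun y => deriv φ y ^ 2) x :=
    (h.differentiable_deriv_phase x).fun_pow 2
  have hmom := h.momentum_eq x
  have hsplit : (fun y => -F (ρ y) (φ y) - V (φ y) - (γ / 2) * deriv φ y ^ 2
      + ρ y * chemicalPotential F ρ φ y) = fun y =>
        ρ y * chemicalPotential F ρ φ y - firstIntegral γ F V ρ φ y - γ * deriv φ y ^ 2 := by
    funext y
    simp only [firstIntegral]
    ring
  rw [hsplit, deriv_fun_sub (hμ.fun_sub hE) (hsq.const_mul γ), deriv_fun_sub hμ hE,
    deriv_const_mul _ hsq] at hmom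
  linear_combination hmom

theorem hasDerivAt_chemicalPotential (h : IsPlanarEquilibrium γ F V ρ φ) {x : ℝ}
    (hF : ContDiffAt ℝ 2 (uncurry F) (ρ x, φ x)) (hV : DifferentiableAt ℝ V (φ x)) :
    HasDerivAt (chemicalPotential F ρ φ) 0 x := by
  have hρ := h.differentiable_density x
  have hμ := differentiableAt_chemicalPotential hF hρ (h.differentiable_phase x)
  have hprod : ρ x * deriv (chemicalPotential F ρ φ) x = 0 := by
    have hmul := h.deriv_density_mul_chemicalPotential hF hV
    rw [deriv_fun_mul hρ hμ,
      (h.hasDerivAt_firstIntegral (hF.differentiableAt two_ne_zero) hV).deriv] at hmul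
    linear_combination hmul
  exact hμ.hasDerivAt.congr_deriv ((mul_eq_zero.1 hprod).resolve_left (h.density_ne_zero x))

theorem chemicalPotential_eq_of_tendsto [NeBot l] (h : IsPlanarEquilibrium γ F V ρ φ)
    (hF : ∀ x, ContDiffAt ℝ 2 (uncurry F) (ρ x, φ x)) (hV : Differentiable ℝ V)
    (hFab : ContDiffAt ℝ 1 (uncurry F) (a, b))
    (hρ : Tendsto ρ l (𝓝 a)) (hφ : Tendsto φ l (𝓝 b)) (x : ℝ) :
    chemicalPotential F ρ φ x = deriv (fun r => F r b) a :=
  eq_of_hasDerivAt_zero_of_tendsto (fun y => h.hasDerivAt_chemicalPotential (hF y) (hV (φ y)))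
    (tendsto_chemicalPotential hFab hρ hφ) x

theorem firstIntegral_eq_of_tendsto [NeBot l] (h : IsPlanarEquilibrium γ F V ρ φ)
    (hF : ∀ x, DifferentiableAt ℝ (uncurry F) (ρ x, φ x)) (hV : Differentiable ℝ V)
    (hμ : ∀ x, chemicalPotential F ρ φ x = 0)
    (hFab : ContinuousAt (uncurry F) (a, b))
    (hρ : Tendsto ρ l (𝓝 a)) (hφ : Tendsto φ l (𝓝 b)) (hφ' : Tendsto (deriv φ) l (𝓝 0)) (x : ℝ) :
    firstIntegral γ F V ρ φ x = F a b + V b :=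
  eq_of_hasDerivAt_zero_of_tendsto
    (fun y => by simpa only [hμ, zero_mul] using h.hasDerivAt_firstIntegral (hF y) (hV (φ y)))
    (tendsto_firstIntegral hFab hV.continuous.continuousAt hρ hφ hφ') x

theorem freeEnergyDensity_sub_bulk_eq [NeBot l] (h : IsPlanarEquilibrium γ F V ρ φ)
    (hF : ∀ x, DifferentiableAt ℝ (uncurry F) (ρ x, φ x)) (hV : Differentiable ℝ V)
    (hμ : ∀ x, chemicalPotential F ρ φ x = 0)
    (hFab : ContinuousAt (uncurry F) (a, b))
    (hρ : Tendsto ρ l (𝓝 a)) (hφ : Tendsto φ l (𝓝 b)) (hφ' : Tendsto (deriv φ) l (𝓝 0)) (x : ℝ) :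
    freeEnergyDensity γ F V ρ φ x - (F a b + V b) = γ * deriv φ x ^ 2 := by
  rw [freeEnergyDensity_eq_firstIntegral_add, h.firstIntegral_eq_of_tendsto hF hV hμ hFab hρ hφ hφ',
    add_sub_cancel_left]

end IsPlanarEquilibrium

theorem excess_free_energy_eq_gradient_energy_general {ρV φV ρL φL : ℝ}
    (h : IsPlanarEquilibrium γ F V ρ φ)
    (hF : ∀ x, ContDiffAt ℝ 2 (uncurry F) (ρ x, φ x)) (hV : Differentiable ℝ V)
    (hFV : ContDiffAt ℝ 1 (uncurry F) (ρV, φV)) (hFL : ContinuousAt (uncurry F) (ρL, φL))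
    (hρV : Tendsto ρ atBot (𝓝 ρV)) (hφV : Tendsto φ atBot (𝓝 φV))
    (hφ'V : Tendsto (deriv φ) atBot (𝓝 0))
    (hρL : Tendsto ρ atTop (𝓝 ρL)) (hφL : Tendsto φ atTop (𝓝 φL))
    (hφ'L : Tendsto (deriv φ) atTop (𝓝 0))
    (hcrit : deriv (fun r => F r φV) ρV = 0)
    (hint : Integrable fun x => deriv φ x ^ 2) (x₀ : ℝ) :
    IntegrableOn (fun x => freeEnergyDensity γ F V ρ φ x - (F ρV φV + V φV)) (Iic x₀) ∧
    IntegrableOn (fun x => freeEnergyDensity γ F V ρ φ x - (F ρL φL + V φL)) (Ici x₀) ∧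
    (∫ x in Iic x₀, (freeEnergyDensity γ F V ρ φ x - (F ρV φV + V φV))) +
      (∫ x in Ici x₀, (freeEnergyDensity γ F V ρ φ x - (F ρL φL + V φL))) =
        ∫ x, γ * deriv φ x ^ 2 := by
  have hFdiff := fun x => (hF x).differentiableAt two_ne_zero
  have hμ : ∀ x, chemicalPotential F ρ φ x = 0 := fun x =>
    (h.chemicalPotential_eq_of_tendsto hF hV hFV hρV hφV x).trans hcrit
  have hvapor := h.freeEnergyDensity_sub_bulk_eq hFdiff hV hμ hFV.continuousAt hρV hφV hφ'V
  have hliquid := h.freeEnergyDensity_sub_bulk_eq hFdiff hV hμ hFL hρL hφL hφ'L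
  have hgrad : Integrable fun x => γ * deriv φ x ^ 2 := hint.const_mul γ
  simp only [hvapor, hliquid]
  refine ⟨hgrad.integrableOn, hgrad.integrableOn, ?_⟩
  rw [integral_Ici_eq_integral_Ioi]
  exact intervalIntegral.integral_Iic_add_Ioi hgrad.integrableOn hgrad.integrableOn

end Profile

/-- **Surface tension as excess free energy.**
For a planar static equilibrium profile of the compressible Navier–Stokes–Allen–Cahn
model connecting the vapor state `(ρ_V,0)` at `−∞` to the liquid state `(ρ_L,1)` at
`+∞`, and for every dividing-interface position `x₀`, the excess free energy (relative
to the sharp-interface reference state) is well defined and equals `∫ γ φ′² dx`;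
in particular it is independent of `x₀`. -/
theorem excess_free_energy_eq_gradient_energy
    (γ : ℝ) (hγ : 0 < γ)
    (F : ℝ → ℝ → ℝ)
    (hF : ContDiffOn ℝ 2 (fun p : ℝ × ℝ => F p.1 p.2) (Ioi (0:ℝ) ×ˢ (univ : Set ℝ)))
    (W : ℝ → ℝ) (hW : W = fun s => s ^ 2 * (1 - s) ^ 2)
    (ρ φ : ℝ → ℝ)
    (hρ : ContDiff ℝ 2 ρ) (hφ : ContDiff ℝ 2 φ)
    (hρpos : ∀ x, 0 < ρ x)
    (ode1 : ∀ x : ℝ,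
      deriv (fun y =>
          -F (ρ y) (φ y) - (1/γ) * W (φ y) - (γ/2) * (deriv φ y) ^ 2
            + ρ y * deriv (fun r => F r (φ y)) (ρ y)) x
        = -γ * deriv (fun y => (deriv φ y) ^ 2) x)
    (ode2 : ∀ x : ℝ,
      (1/γ) * deriv W (φ x) + deriv (fun s => F (ρ x) s) (φ x)
        = γ * deriv (deriv φ) x)
    (ρV ρL : ℝ) (hρV : 0 < ρV) (hρL : 0 < ρL)
    (hlimρ : Tendsto ρ atBot (nhds ρV))
    (hlimφ : Tendsto φ atBot (nhds 0))
    (hlimφ' : Tendsto (deriv φ) atBot (nhds 0))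
    (hlimρtop : Tendsto ρ atTop (nhds ρL))
    (hlimφtop : Tendsto φ atTop (nhds 1))
    (hlimφ'top : Tendsto (deriv φ) atTop (nhds 0))
    (hcrit : deriv (fun r => F r 0) ρV = 0)
    (hint : Integrable (fun x => (deriv φ x) ^ 2)) :
    ∀ x₀ : ℝ,
      IntegrableOn
        (fun x => F (ρ x) (φ x) + (1/γ) * W (φ x) + (γ/2) * (deriv φ x) ^ 2 - F ρV 0)
        (Iic x₀) ∧
      IntegrableOn
        (fun x => F (ρ x) (φ x) + (1/γ) * W (φ x) + (γ/2) * (deriv φ x) ^ 2 - F ρL 1)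
        (Ici x₀) ∧
      (∫ x in Iic x₀,
          (F (ρ x) (φ x) + (1/γ) * W (φ x) + (γ/2) * (deriv φ x) ^ 2 - F ρV 0)) +
        (∫ x in Ici x₀,
          (F (ρ x) (φ x) + (1/γ) * W (φ x) + (γ/2) * (deriv φ x) ^ 2 - F ρL 1))
        = ∫ x : ℝ, γ * (deriv φ x) ^ 2 := by
  have hFat : ∀ r s : ℝ, 0 < r → ContDiffAt ℝ 2 (uncurry F) (r, s) := fun r s hr =>
    hF.contDiffAt ((isOpen_Ioi.prod isOpen_univ).mem_nhds ⟨hr, mem_univ s⟩)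
  have hWdiff : Differentiable ℝ W := by rw [hW]; fun_prop
  have hequil : IsPlanarEquilibrium γ F (fun s => (1/γ) * W s) ρ φ :=
    { differentiable_density := hρ.differentiable two_ne_zero
      differentiable_phase := hφ.differentiable two_ne_zero
      differentiable_deriv_phase := hφ.differentiable_deriv_two
      density_ne_zero := fun x => (hρpos x).ne'
      momentum_eq := ode1
      phase_eq := fun x => by rw [deriv_const_mul _ (hWdiff _)]; exact ode2 x }
  have hW0 : W 0 = 0 := by simp [hW]
  have hW1 : W 1 = 0 := by simp [hW]
  simpa only [freeEnergyDensity, hW0, hW1, mul_zero, add_zero] using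
    excess_free_energy_eq_gradient_energy_general hequil (fun x => hFat _ _ (hρpos x))
      (hWdiff.const_mul _) ((hFat _ _ hρV).of_le one_le_two) (hFat _ _ hρL).continuousAt
      hlimρ hlimφ hlimφ' hlimρtop hlimφtop hlimφ'top hcrit hint
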